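/- For every tour σ on {1,…,r} with incidence vector x and positions u, the inequality −2u_i + u_j + u_k + (2r−8)(x_{ij} + x_{ik}) + (2r−2)(x_{ji} + x_{ki}) + (2r−5)(x_{jk} + x_{kj}) ≤ 4r − 10 holds for all pairwise distinct i, j, k ∈ {2,…,r}. -/

import Mathlib

/-- A tour on the node set `Fin r`: a permutation consisting of a single cycle
through all `r` nodes. -/
def IsTour {r : ℕ} (σ : Equiv.Perm (Fin r)) : Prop :=
  σ.IsCycle ∧ ∀ i, σ i ≠ i

/-- The incidence vector of a tour `σ`: `x i j = 1` iff `j = σ i`. -/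
def incidence {r : ℕ} (σ : Equiv.Perm (Fin r)) (i j : Fin r) : ℝ :=
  if σ i = j then 1 else 0

/-- `u` gives the positions of the nodes along the tour `σ`: `u i` is the
(unique) integer in `{1, …, r}` with `σ^(u i − 1) 1 = i` (node `1` is index `0`). -/
def IsPositions {r : ℕ} [NeZero r] (σ : Equiv.Perm (Fin r)) (u : Fin r → ℕ) : Prop :=
  ∀ i, 1 ≤ u i ∧ u i ≤ r ∧ (σ ^ (u i - 1)) (0 : Fin r) = i

/-!
For a node `b` other than the start, the tour uses the arc `a → b` exactly when `b` comes one
position after `a`. So the left-hand side depends only on the positions of `i`, `j` and `k`, which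
are distinct integers in `[2, r]`, and it is symmetric in `j` and `k`. Once the three nodes are
sorted, only the two arcs between neighbours in the order can occur, and the bound is elementary in
each of the three orders. The three coefficients are the unique ones for which the paths
`i → j → k`, `j → i → k` and `j → k → i` all give equality.
-/

namespace IsPositions

variable {r : ℕ} [NeZero r] {σ : Equiv.Perm (Fin r)} {u : Fin r → ℕ}

lemma injective (hu : IsPositions σ u) : Function.Injective u := by
  intro a b hab
  rw [← (hu a).2.2, ← (hu b).2.2, hab]

lemma image_univ (hu : IsPositions σ u) : Finset.univ.image u = Finset.Icc 1 r := by
  apply Finset.eq_of_subset_of_card_le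
  · exact Finset.image_subset_iff.2 fun a _ ↦ Finset.mem_Icc.2 ⟨(hu a).1, (hu a).2.1⟩
  · simp [Finset.card_image_of_injective _ hu.injective]

lemma two_le (hu : IsPositions σ u) {a : Fin r} (ha : a ≠ 0) : 2 ≤ u a := by
  obtain ⟨one_le, -, pow_apply⟩ := hu a
  have ne_one : u a ≠ 1 := fun h ↦ ha (by simpa [h] using pow_apply.symm)
  omega

lemma apply_eq_of_eq_succ (hu : IsPositions σ u) {a b : Fin r} (h : u b = u a + 1) :
    σ a = b := by
  have one_le := (hu a).1
  calc
    σ a = σ ((σ ^ (u a - 1)) 0) := by rw [(hu a).2.2]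
    _ = (σ ^ (u b - 1)) 0 := by
      rw [← Equiv.Perm.mul_apply, ← pow_succ', h, Nat.sub_add_cancel one_le, Nat.add_sub_cancel]
    _ = b := (hu b).2.2

lemma apply_eq_iff (hu : IsPositions σ u) {a b : Fin r} (hb : b ≠ 0) :
    σ a = b ↔ u b = u a + 1 := by
  refine ⟨fun hab ↦ ?_, hu.apply_eq_of_eq_succ⟩
  have two_le := hu.two_le hb
  have le_r := (hu b).2.1
  obtain ⟨c, -, hc⟩ : ∃ c ∈ Finset.univ, u c = u b - 1 := by
    rw [← Finset.mem_image, hu.image_univ, Finset.mem_Icc]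
    omega
  have hcb : σ c = b := hu.apply_eq_of_eq_succ (by omega)
  obtain rfl : c = a := σ.injective (hcb.trans hab.symm)
  omega

end IsPositions

/-- The incidence vector of a tour in terms of positions: the indicator of position `q` coming
immediately after position `p`. It is integer-valued so that bounds on it are integer
arithmetic. -/
def positionArc (p q : ℤ) : ℤ :=
  if q = p + 1 then 1 else 0

lemma positionArc_eq_zero_of_le {p q : ℤ} (h : q ≤ p) : positionArc p q = 0 :=
  if_neg (by omega)

lemma positionArc_eq_zero_of_lt_of_lt {p q s : ℤ} (hpq : p < q) (hqs : q < s) :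
    positionArc p s = 0 :=
  if_neg (by omega)

lemma IsPositions.incidence_eq_positionArc {r : ℕ} [NeZero r] {σ : Equiv.Perm (Fin r)}
    {u : Fin r → ℕ} (hu : IsPositions σ u) (a : Fin r) {b : Fin r} (hb : b ≠ 0) :
    incidence σ a b = positionArc (u a) (u b) := by
  simp only [incidence, positionArc, hu.apply_eq_iff hb]
  norm_cast

/-- The left-hand side of the radical reverse inequality as a function of the positions `p`, `q`
and `s` of the nodes `i`, `j` and `k`. -/
def radicalReverseForm (r p q s : ℤ) : ℤ :=
  -(2 * p) + q + s
    + (2 * r - 8) * (positionArc p q + positionArc p s)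
    + (2 * r - 2) * (positionArc q p + positionArc s p)
    + (2 * r - 5) * (positionArc q s + positionArc s q)

lemma radicalReverseForm_comm (r p q s : ℤ) :
    radicalReverseForm r p q s = radicalReverseForm r p s q := by
  unfold radicalReverseForm
  ring

section Sorted

variable {r x y z : ℤ}

lemma radicalReverseForm_le_of_first (hx : 2 ≤ x) (hxy : x < y) (hyz : y < z) (hz : z ≤ r) :
    radicalReverseForm r x y z ≤ 4 * r - 10 := by
  have form_eq : radicalReverseForm r x y z = -(2 * x) + y + z
      + (2 * r - 8) * positionArc x y + (2 * r - 5) * positionArc y z := by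
    simp [radicalReverseForm, positionArc_eq_zero_of_le hxy.le, positionArc_eq_zero_of_le hyz.le,
      positionArc_eq_zero_of_le (hxy.trans hyz).le, positionArc_eq_zero_of_lt_of_lt hxy hyz]
  rw [form_eq]
  unfold positionArc
  split_ifs <;> omega

lemma radicalReverseForm_le_of_middle (hx : 2 ≤ x) (hxy : x < y) (hyz : y < z) (hz : z ≤ r) :
    radicalReverseForm r y x z ≤ 4 * r - 10 := by
  have form_eq : radicalReverseForm r y x z = -(2 * y) + x + z
      + (2 * r - 8) * positionArc y z + (2 * r - 2) * positionArc x y := by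
    simp [radicalReverseForm, positionArc_eq_zero_of_le hxy.le, positionArc_eq_zero_of_le hyz.le,
      positionArc_eq_zero_of_le (hxy.trans hyz).le, positionArc_eq_zero_of_lt_of_lt hxy hyz]
  rw [form_eq]
  unfold positionArc
  split_ifs <;> omega

lemma radicalReverseForm_le_of_last (hx : 2 ≤ x) (hxy : x < y) (hyz : y < z) (hz : z ≤ r) :
    radicalReverseForm r z x y ≤ 4 * r - 10 := by
  have form_eq : radicalReverseForm r z x y = -(2 * z) + x + y
      + (2 * r - 2) * positionArc y z + (2 * r - 5) * positionArc x y := by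
    simp [radicalReverseForm, positionArc_eq_zero_of_le hxy.le, positionArc_eq_zero_of_le hyz.le,
      positionArc_eq_zero_of_le (hxy.trans hyz).le, positionArc_eq_zero_of_lt_of_lt hxy hyz]
  rw [form_eq]
  unfold positionArc
  split_ifs <;> omega

end Sorted

lemma radicalReverseForm_le {r p q s : ℤ} (hp : p ∈ Set.Icc 2 r) (hq : q ∈ Set.Icc 2 r)
    (hs : s ∈ Set.Icc 2 r) (hpq : p ≠ q) (hps : p ≠ s) (hqs : q ≠ s) :
    radicalReverseForm r p q s ≤ 4 * r - 10 := by
  wlog hlt : q < s generalizing q s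
  · rw [radicalReverseForm_comm]
    exact this hs hq hps hpq hqs.symm (hqs.lt_or_gt.resolve_left hlt)
  rcases hpq.lt_or_gt with p_lt_q | q_lt_p
  · exact radicalReverseForm_le_of_first hp.1 p_lt_q hlt hs.2
  rcases hps.lt_or_gt with p_lt_s | s_lt_p
  · exact radicalReverseForm_le_of_middle hq.1 q_lt_p p_lt_s hs.2
  · exact radicalReverseForm_le_of_last hq.1 hlt s_lt_p hp.2

theorem radical_reverse_valid (r : ℕ) [NeZero r] (hr : 4 ≤ r)
    (σ : Equiv.Perm (Fin r)) (hσ : IsTour σ)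
    (u : Fin r → ℕ) (hu : IsPositions σ u)
    (i j k : Fin r) (hi : i ≠ 0) (hj : j ≠ 0) (hk : k ≠ 0)
    (hij : i ≠ j) (hik : i ≠ k) (hjk : j ≠ k) :
    -(2 * (u i : ℝ)) + (u j : ℝ) + (u k : ℝ)
      + (2 * (r : ℝ) - 8) * (incidence σ i j + incidence σ i k)
      + (2 * (r : ℝ) - 2) * (incidence σ j i + incidence σ k i)
      + (2 * (r : ℝ) - 5) * (incidence σ j k + incidence σ k j)
      ≤ 4 * (r : ℝ) - 10 := by
  have mem_Icc {a : Fin r} (ha : a ≠ 0) : (u a : ℤ) ∈ Set.Icc 2 (r : ℤ) :=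
    ⟨mod_cast hu.two_le ha, mod_cast (hu a).2.1⟩
  have ne {a b : Fin r} (hab : a ≠ b) : (u a : ℤ) ≠ u b :=
    mod_cast hu.injective.ne hab
  have form_le : radicalReverseForm r (u i) (u j) (u k) ≤ 4 * (r : ℤ) - 10 :=
    radicalReverseForm_le (mem_Icc hi) (mem_Icc hj) (mem_Icc hk) (ne hij) (ne hik) (ne hjk)
  simp only [hu.incidence_eq_positionArc _ hi, hu.incidence_eq_positionArc _ hj,
    hu.incidence_eq_positionArc _ hk]
  exact_mod_cast form_le
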